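/- Let X be a δ-hyperbolic graph, let 𝒴 be an M0-geometrically separated family of nonempty K-quasiconvex subsets of X, and suppose there exists R ≥ 0 with X = ∪_{Y ∈ 𝒴} N_R(Y). Consider the index set 𝒳 given by the disjoint union of the vertex set of X and the family 𝒴, with projections defined as follows: for a vertex x of X and any b ∈ 𝒳 − {x}, π_x(b) = {x}; for Y ∈ 𝒴, π_Y(z) is the nearest-point projection for a vertex z, and π_Y(U) = ∪_{u∈U} π_Y(u) for U ∈ 𝒴 − {Y}; for a ∈ 𝒳 and b, c ∈ 𝒳 − {a}, set d_a^π(b,c) = diam(π_a(b) ∪ π_a(c)). Then there is a constant Θ, depending only on δ, K, M0 and R and bounded above by a linear function of M0 (with coefficients depending only on δ, K, R), such that for all pairwise distinct a, b, c ∈ 𝒳: (I) d_a^π(b,c) = d_a^π(c,b); (II) the triangle inequality d_a^π(b,d) ≤ d_a^π(b,c) + d_a^π(c,d) holds for d ∈ 𝒳 − {a}; (III) d_a^π(b,b) ≤ Θ; (IV) min{d_a^π(b,c), d_b^π(a,c)} ≤ Θ; and (V) for all distinct b, c ∈ 𝒳 the set {a ∈ 𝒳 − {b,c} : d_a^π(b,c)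 ≥ Θ} is finite. -/

import Mathlib

/-!
The idea: in a `δ`-hyperbolic graph, if `x₁, x₂` project to `y₁, y₂` on a `K`-quasiconvex set `Y`,
then the part of `[y₁, y₂]` that stays further than `4δ + K` from both ends lies in the
`2δ`-neighbourhood of `[x₁, x₂]` (`near_of_proj`), because the sides `[xᵢ, yᵢ]` are shortest
paths to `Y`. Everything follows from this and from geometric separation.

* If `x₁, x₂` lie in another member `U`, then the middle of `[y₁, y₂]` is `(K + 2δ)`-close to `U`
  and `K`-close to `Y`, so separation bounds `d(y₁, y₂)` linearly in `M0` (`proj_member_le`).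
  This is axiom (III).
* If `d(y₁, y₂)` is large, then `[x₁, x₂]` passes near `y₁` (`dist_add_dist_le`). For two members
  `Y, Z` and a vertex `x`, large projections on both would force `[x, π_Z x]` to pass near `π_Y x`
  and `[x, π_Y x]` near `π_Z x`, hence `π_Y x` and `π_Z x` would be close, and the projection of
  `π_Z x` to `Y` would be close to `π_Y x` (`behrstock_vertex`). This is axiom (IV).
* For fixed `x, z`, a member `Y` with `d_Y(x, z)` large fellow-travels a long piece of `[x, z]`.
  Two members fellow-travelling the same long piece contradict separation, so `Y` is determined by
  the two endpoints of the piece, recorded as distances from `x` (`shadow_injective`). There are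
  finitely many such pairs of integers, which is axiom (V).

Vertices used as indices only produce projections of diameter `0`. Geodesics enter through the
relation `OnGeod G x m y`, saying that `m` lies on some geodesic from `x` to `y`.
-/

open scoped ENNReal

/-- `G` is `δ`-hyperbolic: every geodesic triangle is `δ`-slim, i.e. (the support of) each
geodesic side lies in the closed `δ`-neighborhood of the union of the other two sides. -/
def SlimTrianglesG {V : Type*} (G : SimpleGraph V) (δ : ℝ) : Prop :=
  ∀ ⦃x y z : V⦄ (p : G.Walk x y) (q : G.Walk x z) (r : G.Walk z y),
    p.length = G.dist x y → q.length = G.dist x z → r.length = G.dist z y →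
    ∀ v ∈ p.support, ∃ w, (w ∈ q.support ∨ w ∈ r.support) ∧ (G.dist v w : ℝ) ≤ δ

/-- `Y` is `K`-quasiconvex in `G`: every geodesic with endpoints in `Y` is contained in
the closed `K`-neighborhood of `Y`. -/
def QuasiconvexIn {V : Type*} (G : SimpleGraph V) (K : ℝ) (Y : Set V) : Prop :=
  ∀ ⦃x⦄, x ∈ Y → ∀ ⦃y⦄, y ∈ Y → ∀ w : G.Walk x y, w.length = G.dist x y →
    ∀ v ∈ w.support, ∃ u ∈ Y, (G.dist v u : ℝ) ≤ K

/-- The closed `r`-neighborhood of a set `A` of vertices. -/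
def nbhd {V : Type*} (G : SimpleGraph V) (r : ℝ) (A : Set V) : Set V :=
  {v | ∃ a ∈ A, (G.dist v a : ℝ) ≤ r}

/-- The nearest-point projection of the vertex `z` to the set `Y`:
`π_Y(z) = {y ∈ Y | dist(z,y) = dist(z,Y)}`. -/
def projSet {V : Type*} (G : SimpleGraph V) (Y : Set V) (z : V) : Set V :=
  {y ∈ Y | ∀ y' ∈ Y, G.dist z y ≤ G.dist z y'}

/-- The nearest-point projection of a set `A` to `Y`: `π_Y(A) = ⋃_{a ∈ A} π_Y(a)`. -/
def projSetOf {V : Type*} (G : SimpleGraph V) (Y A : Set V) : Set V :=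
  ⋃ a ∈ A, projSet G Y a

/-- The diameter (in `ℝ≥0∞`) of a set of vertices of `G`. -/
noncomputable def gdiam {V : Type*} (G : SimpleGraph V) (S : Set V) : ℝ≥0∞ :=
  ⨆ a ∈ S, ⨆ b ∈ S, (G.dist a b : ℝ≥0∞)

/-- `d_Y^π(A,B) = diam(π_Y(A) ∪ π_Y(B))`. -/
noncomputable def projDiam {V : Type*} (G : SimpleGraph V) (Y A B : Set V) : ℝ≥0∞ :=
  gdiam G (projSetOf G Y A ∪ projSetOf G Y B)

/-- Projections on the index set `𝒳 = V ⊕ 𝒴`: a vertex `x` projects everything to `{x}`;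
an element `Y ∈ 𝒴` projects a vertex by nearest-point projection and a member `U ∈ 𝒴` to
`π_Y(U)`. -/
def projP {V : Type*} (G : SimpleGraph V) (𝒴 : Set (Set V)) :
    (V ⊕ ↥𝒴) → (V ⊕ ↥𝒴) → Set V
  | Sum.inl x, _ => {x}
  | Sum.inr Y, Sum.inl z => projSet G (Y : Set V) z
  | Sum.inr Y, Sum.inr U => projSetOf G (Y : Set V) (U : Set V)

/-- `d_a^π(b,c) = diam(π_a(b) ∪ π_a(c))` on the index set `𝒳 = V ⊕ 𝒴`. -/
noncomputable def dP {V : Type*} (G : SimpleGraph V) (𝒴 : Set (Set V))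
    (a b c : V ⊕ ↥𝒴) : ℝ≥0∞ :=
  gdiam G (projP G 𝒴 a b ∪ projP G 𝒴 a c)

/-- `m` lies on some geodesic from `x` to `y`. -/
def OnGeod {V : Type*} (G : SimpleGraph V) (x m y : V) : Prop :=
  G.dist x m + G.dist m y = G.dist x y

/-! ### Points on geodesics -/

section Basics

variable {V : Type*} {G : SimpleGraph V} {δ K M0 : ℝ}

lemma dcomm (x y : V) : (G.dist x y : ℝ) = G.dist y x := by
  rw [SimpleGraph.dist_comm]

lemma dnonneg (x y : V) : (0 : ℝ) ≤ G.dist x y := Nat.cast_nonneg _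

lemma dtri (hG : G.Connected) (x y z : V) : (G.dist x z : ℝ) ≤ G.dist x y + G.dist y z := by
  exact_mod_cast hG.dist_triangle

lemma OnGeod.real {x m y : V} (h : OnGeod G x m y) :
    (G.dist x m : ℝ) + G.dist m y = G.dist x y := by
  exact_mod_cast h

lemma OnGeod.symm {x m y : V} (h : OnGeod G x m y) : OnGeod G y m x := by
  unfold OnGeod at *
  rw [G.dist_comm (u := y) (v := m), G.dist_comm (u := m) (v := x),
    G.dist_comm (u := y) (v := x)]
  omega

lemma OnGeod.exists_walk (hG : G.Connected) {x m y : V} (h : OnGeod G x m y) :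
    ∃ p : G.Walk x y, p.length = G.dist x y ∧ m ∈ p.support := by
  obtain ⟨p, hp⟩ := hG.exists_walk_length_eq_dist x m
  obtain ⟨q, hq⟩ := hG.exists_walk_length_eq_dist m y
  refine ⟨p.append q, ?_, ?_⟩
  · rw [SimpleGraph.Walk.length_append, hp, hq]
    exact h
  · simp

lemma btw_of_mem_support (hG : G.Connected) {x m y : V} (p : G.Walk x y)
    (hp : p.length = G.dist x y) (hm : m ∈ p.support) : OnGeod G x m y := by
  classical
  have h1 := SimpleGraph.dist_le (p.takeUntil m hm)
  have h2 := SimpleGraph.dist_le (p.dropUntil m hm)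
  have h3 := congrArg SimpleGraph.Walk.length (p.take_spec hm)
  rw [SimpleGraph.Walk.length_append] at h3
  have h4 := hG.dist_triangle (u := x) (v := m) (w := y)
  unfold OnGeod
  omega

lemma exists_btw_dist (hG : G.Connected) (x y : V) {n : ℕ} (hn : n ≤ G.dist x y) :
    ∃ m, OnGeod G x m y ∧ G.dist x m = n := by
  obtain ⟨p, hp⟩ := hG.exists_walk_length_eq_dist x y
  have h1 := SimpleGraph.dist_le (p.take n)
  have h2 := SimpleGraph.dist_le (p.drop n)
  have h3 : (p.take n).length = min n p.length := by simp
  have h4 : (p.drop n).length = p.length - n := by simp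
  have h5 := hG.dist_triangle (u := x) (v := p.getVert n) (w := y)
  refine ⟨p.getVert n, ?_, ?_⟩
  · unfold OnGeod
    omega
  · omega

lemma exists_onGeod_between (hG : G.Connected) {x y : V} {s : ℝ} (hs : 0 ≤ s)
    (h : s + 1 ≤ G.dist x y) :
    ∃ m, OnGeod G x m y ∧ s < G.dist m x ∧ (G.dist m x : ℝ) ≤ s + 1 := by
  have h1 : ((⌊s⌋₊ : ℕ) : ℝ) ≤ s := Nat.floor_le hs
  have h2 : s < (⌊s⌋₊ : ℝ) + 1 := Nat.lt_floor_add_one s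
  have h3 : ⌊s⌋₊ + 1 ≤ G.dist x y := by
    have : ((⌊s⌋₊ + 1 : ℕ) : ℝ) ≤ G.dist x y := by push_cast; linarith
    exact_mod_cast this
  obtain ⟨m, hm, hd⟩ := exists_btw_dist hG x y h3
  refine ⟨m, hm, ?_, ?_⟩ <;> rw [dcomm, hd] <;> push_cast <;> linarith

/-- Two points, one near each end of a long geodesic, both at depth more than `s` from both ends. -/
lemma exists_two_deep (hG : G.Connected) {x y : V} {s : ℝ} (hs : 0 ≤ s)
    (h : 2 * s + 2 < G.dist x y) :
    ∃ m₁ m₂, OnGeod G x m₁ y ∧ OnGeod G x m₂ y ∧ s < G.dist m₁ x ∧ s < G.dist m₁ y ∧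
      s < G.dist m₂ x ∧ s < G.dist m₂ y ∧
      (G.dist m₁ x : ℝ) ≤ s + 1 ∧ (G.dist m₂ y : ℝ) ≤ s + 1 := by
  obtain ⟨m₁, b₁, l₁, u₁⟩ := exists_onGeod_between hG (x := x) (y := y) hs (by linarith)
  obtain ⟨m₂, b₂, l₂, u₂⟩ := exists_onGeod_between hG (x := y) (y := x) hs
    (by rw [dcomm]; linarith)
  have e₁ := b₁.real
  have e₂ := b₂.symm.real
  rw [dcomm x m₁] at e₁
  rw [dcomm x m₂] at e₂
  exact ⟨m₁, m₂, b₁, b₂.symm, l₁, by linarith, by linarith, l₂, u₁, u₂⟩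

lemma slim_btw (hG : G.Connected) (hS : SlimTrianglesG G δ) {x y v : V} (z : V)
    (h : OnGeod G x v y) :
    ∃ w, (OnGeod G x w z ∨ OnGeod G z w y) ∧ (G.dist v w : ℝ) ≤ δ := by
  obtain ⟨p, hp, hv⟩ := h.exists_walk hG
  obtain ⟨q, hq⟩ := hG.exists_walk_length_eq_dist x z
  obtain ⟨r, hr⟩ := hG.exists_walk_length_eq_dist z y
  obtain ⟨w, hw, hd⟩ := hS p q r hp hq hr v hv
  exact ⟨w, hw.imp (btw_of_mem_support hG q hq) (btw_of_mem_support hG r hr), hd⟩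

lemma quad_btw (hG : G.Connected) (hS : SlimTrianglesG G δ) (hδ : 0 ≤ δ) {a b m : V} (c e : V)
    (h : OnGeod G a m b) :
    ∃ w, (OnGeod G a w c ∨ OnGeod G c w e ∨ OnGeod G e w b) ∧ (G.dist m w : ℝ) ≤ 2 * δ := by
  obtain ⟨w, hw | hw, hd⟩ := slim_btw hG hS c h
  · exact ⟨w, Or.inl hw, by linarith⟩
  · obtain ⟨w', hw', hd'⟩ := slim_btw hG hS e hw
    exact ⟨w', Or.inr hw', by linarith [dtri hG m w w']⟩

/-- Geodesics with common endpoints fellow-travel: two points at the same distance from one end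
are `2δ`-close. This is slimness of a triangle with two equal corners. -/
lemma bigon (hG : G.Connected) (hS : SlimTrianglesG G δ) {x z p p' : V}
    (hp : OnGeod G x p z) (hp' : OnGeod G x p' z) (h : G.dist x p = G.dist x p') :
    (G.dist p p' : ℝ) ≤ 2 * δ := by
  obtain ⟨P, hP, hpm⟩ := hp.exists_walk hG
  -- a geodesic through `p'`, so that the comparison point is at a controlled distance from `p'`
  obtain ⟨q₁, hq₁⟩ := hG.exists_walk_length_eq_dist x p'
  obtain ⟨q₂, hq₂⟩ := hG.exists_walk_length_eq_dist p' z
  have hq : (q₁.append q₂).length = G.dist x z := by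
    rw [SimpleGraph.Walk.length_append, hq₁, hq₂]
    exact hp'
  obtain ⟨w, hw, hd⟩ := hS P (q₁.append q₂) (SimpleGraph.Walk.nil : G.Walk z z) hP hq (by simp)
    p hpm
  have hw' : w ∈ (q₁.append q₂).support := by
    rcases hw with hw | hw
    · exact hw
    · rw [SimpleGraph.Walk.support_nil, List.mem_singleton] at hw
      subst hw
      exact SimpleGraph.Walk.end_mem_support _
  have hr : (G.dist x p : ℝ) = G.dist x p' := by exact_mod_cast h
  have t1 := dtri hG x w p
  have t2 := dtri hG x p w
  have t3 := dtri hG p w p'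
  have c1 := dcomm (G := G) w p
  have c2 := dcomm (G := G) w p'
  rcases (SimpleGraph.Walk.mem_support_append_iff _ _).1 hw' with h' | h'
  · have e := (btw_of_mem_support hG q₁ hq₁ h').real
    linarith
  · have e := (btw_of_mem_support hG q₂ hq₂ h').real
    have e1 := hp'.real
    have e2 := (btw_of_mem_support hG _ hq hw').real
    linarith

lemma QuasiconvexIn.btw (hG : G.Connected) {Y : Set V} (hY : QuasiconvexIn G K Y) {x y m : V}
    (hx : x ∈ Y) (hy : y ∈ Y) (h : OnGeod G x m y) : ∃ u ∈ Y, (G.dist m u : ℝ) ≤ K := by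
  obtain ⟨p, hp, hm⟩ := h.exists_walk hG
  exact hY hx hy p hp m hm

lemma projSet_nonempty {Y : Set V} (hY : Y.Nonempty) (z : V) : (projSet G Y z).Nonempty := by
  classical
  let P : ℕ → Prop := fun n => ∃ y ∈ Y, G.dist z y = n
  have hP : ∃ n, P n := hY.elim fun y hy => ⟨_, y, hy, rfl⟩
  obtain ⟨y, hy, he⟩ := Nat.find_spec hP
  exact ⟨y, hy, fun y' hy' => he ▸ Nat.find_min' hP ⟨y', hy', rfl⟩⟩

lemma projSet_le {Y : Set V} {z y u : V} (hy : y ∈ projSet G Y z) (hu : u ∈ Y) :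
    (G.dist z y : ℝ) ≤ G.dist z u := by
  exact_mod_cast hy.2 u hu

lemma le_gdiam {S : Set V} {a b : V} (ha : a ∈ S) (hb : b ∈ S) :
    (G.dist a b : ℝ≥0∞) ≤ gdiam G S := by
  have h1 : (G.dist a b : ℝ≥0∞) ≤ ⨆ c ∈ S, (G.dist a c : ℝ≥0∞) :=
    le_iSup₂ (f := fun c (_ : c ∈ S) => (G.dist a c : ℝ≥0∞)) b hb
  exact h1.trans
    (le_iSup₂ (f := fun e (_ : e ∈ S) => ⨆ c ∈ S, (G.dist e c : ℝ≥0∞)) a ha)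

end Basics

/-! ### Projections to quasiconvex sets -/

section Projections

variable {V : Type*} {G : SimpleGraph V} {δ K M0 : ℝ}

/-- A point of `Y`'s `K`-neighbourhood near a shortest path `[x, y]` from `x` to `Y` is near `y`. -/
lemma near_foot (hG : G.Connected) {Y : Set V} {x y p m u : V} (hy : y ∈ projSet G Y x)
    (hp : OnGeod G x p y) (hmp : (G.dist m p : ℝ) ≤ 2 * δ) (hu : u ∈ Y)
    (hmu : (G.dist m u : ℝ) ≤ K) : (G.dist m y : ℝ) ≤ 4 * δ + K := by
  have h1 := hp.real
  have h2 := projSet_le hy hu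
  have h3 := dtri hG x p u
  have h4 := dtri hG p m u
  have h5 := dtri hG m p y
  have h6 := dcomm (G := G) p m
  linarith

/-- The part of `[y₁, y₂]` further than `4δ + K` from both ends is `2δ`-close to `[x₁, x₂]` when `yᵢ` is a
projection of `xᵢ`. -/
lemma near_of_proj (hG : G.Connected) (hS : SlimTrianglesG G δ) (hδ : 0 ≤ δ) {Y : Set V}
    (hY : QuasiconvexIn G K Y) {x₁ x₂ y₁ y₂ m : V} (h₁ : y₁ ∈ projSet G Y x₁)
    (h₂ : y₂ ∈ projSet G Y x₂) (hm : OnGeod G y₁ m y₂) (d₁ : 4 * δ + K < G.dist m y₁)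
    (d₂ : 4 * δ + K < G.dist m y₂) :
    ∃ w, OnGeod G x₁ w x₂ ∧ (G.dist m w : ℝ) ≤ 2 * δ := by
  obtain ⟨u, hu, hmu⟩ := hY.btw hG h₁.1 h₂.1 hm
  obtain ⟨w, hw | hw | hw, hd⟩ := quad_btw hG hS hδ x₁ x₂ hm
  · exact absurd (near_foot hG h₁ hw.symm hd hu hmu) (not_le.2 d₁)
  · exact ⟨w, hw, hd⟩
  · exact absurd (near_foot hG h₂ hw hd hu hmu) (not_le.2 d₂)

/-- How separation is used: if the part of `[y₁, y₂]` further than `A` from both ends is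
`(K + 2δ)`-close to `Y'`, then `[y₁, y₂]` is short. -/
lemma dist_le_of_deep_near (hG : G.Connected) {Y Y' : Set V} (hY : QuasiconvexIn G K Y)
    (hK : 0 ≤ K) (hM : 0 ≤ M0)
    (hsep : gdiam G (Y ∩ nbhd G (2 * K + 2 * δ) Y') ≤ ENNReal.ofReal M0) {A : ℝ} (hA : 0 ≤ A)
    {y₁ y₂ : V} (h₁ : y₁ ∈ Y) (h₂ : y₂ ∈ Y)
    (h : ∀ m, OnGeod G y₁ m y₂ → A < G.dist m y₁ → A < G.dist m y₂ →
      ∃ u ∈ Y', (G.dist m u : ℝ) ≤ K + 2 * δ) :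
    (G.dist y₁ y₂ : ℝ) ≤ M0 + 2 * (A + 1) + 2 * K := by
  by_contra! hlt
  obtain ⟨m₁, m₂, b₁, b₂, l₁, l₁', l₂, l₂', s₁, s₂⟩ :=
    exists_two_deep hG (x := y₁) (y := y₂) hA (by linarith)
  obtain ⟨u₁, hu₁, hd₁⟩ := h m₁ b₁ l₁ l₁'
  obtain ⟨u₂, hu₂, hd₂⟩ := h m₂ b₂ l₂ l₂'
  obtain ⟨v₁, hv₁, he₁⟩ := hY.btw hG h₁ h₂ b₁
  obtain ⟨v₂, hv₂, he₂⟩ := hY.btw hG h₁ h₂ b₂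
  have n₁ : v₁ ∈ Y ∩ nbhd G (2 * K + 2 * δ) Y' :=
    ⟨hv₁, u₁, hu₁, by linarith [dtri hG v₁ m₁ u₁, dcomm (G := G) v₁ m₁]⟩
  have n₂ : v₂ ∈ Y ∩ nbhd G (2 * K + 2 * δ) Y' :=
    ⟨hv₂, u₂, hu₂, by linarith [dtri hG v₂ m₂ u₂, dcomm (G := G) v₂ m₂]⟩
  have h12 : (G.dist v₁ v₂ : ℝ) ≤ M0 := by
    have : (G.dist v₁ v₂ : ℝ≥0∞) ≤ ENNReal.ofReal M0 :=
      (le_gdiam n₁ n₂).trans hsep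
    rw [← ENNReal.ofReal_natCast] at this
    exact (ENNReal.ofReal_le_ofReal_iff hM).1 this
  have t1 := dtri hG y₁ m₁ y₂
  have t2 := dtri hG m₁ v₁ y₂
  have t3 := dtri hG v₁ v₂ y₂
  have t4 := dtri hG v₂ m₂ y₂
  have c1 := dcomm (G := G) y₁ m₁
  have c2 := dcomm (G := G) v₂ m₂
  linarith

/-- The projection of another member of the family has diameter at most
`M0 + 2 (4δ + K + 1) + 2K`. -/
lemma proj_member_le (hG : G.Connected) (hS : SlimTrianglesG G δ) (hδ : 0 ≤ δ) (hK : 0 ≤ K)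
    (hM : 0 ≤ M0) {Y U : Set V} (hY : QuasiconvexIn G K Y) (hU : QuasiconvexIn G K U)
    (hsep : gdiam G (Y ∩ nbhd G (2 * K + 2 * δ) U) ≤ ENNReal.ofReal M0) {u₁ u₂ y₁ y₂ : V}
    (hu₁ : u₁ ∈ U) (hu₂ : u₂ ∈ U) (h₁ : y₁ ∈ projSet G Y u₁) (h₂ : y₂ ∈ projSet G Y u₂) :
    (G.dist y₁ y₂ : ℝ) ≤ M0 + 2 * (4 * δ + K + 1) + 2 * K := by
  refine dist_le_of_deep_near hG hY hK hM hsep (by linarith) h₁.1 h₂.1 ?_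
  intro m hm d₁ d₂
  obtain ⟨w, hw, hd⟩ := near_of_proj hG hS hδ hY h₁ h₂ hm d₁ d₂
  obtain ⟨u, hu, hwu⟩ := hU.btw hG hu₁ hu₂ hw
  exact ⟨u, hu, by linarith [dtri hG m w u]⟩

/-- If the projections of `x₁, x₂` are far apart, `[x₁, x₂]` passes near the projection of `x₁`. -/
lemma dist_add_dist_le (hG : G.Connected) (hS : SlimTrianglesG G δ) (hδ : 0 ≤ δ) (hK : 0 ≤ K)
    {Y : Set V} (hY : QuasiconvexIn G K Y) {x₁ x₂ y₁ y₂ : V} (h₁ : y₁ ∈ projSet G Y x₁)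
    (h₂ : y₂ ∈ projSet G Y x₂) (hd : 2 * (4 * δ + K) + 2 < G.dist y₁ y₂) :
    (G.dist x₁ y₁ : ℝ) + G.dist y₁ x₂ ≤ G.dist x₁ x₂ + 2 * (6 * δ + K + 1) := by
  obtain ⟨m₁, -, b₁, -, l₁, l₁', -, -, s₁, -⟩ := exists_two_deep hG (by linarith) hd
  obtain ⟨w, hw, hd⟩ := near_of_proj hG hS hδ hY h₁ h₂ b₁ l₁ l₁'
  have e := hw.real
  have t1 := dtri hG x₁ w y₁
  have t2 := dtri hG y₁ w x₂
  have t3 := dtri hG y₁ m₁ w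
  have c1 := dcomm (G := G) y₁ m₁
  have c2 := dcomm (G := G) y₁ w
  linarith

lemma proj_vertex_le (hG : G.Connected) (hS : SlimTrianglesG G δ) (hδ : 0 ≤ δ) (hK : 0 ≤ K)
    {Y : Set V} (hY : QuasiconvexIn G K Y) {x y₁ y₂ : V} (h₁ : y₁ ∈ projSet G Y x)
    (h₂ : y₂ ∈ projSet G Y x) : (G.dist y₁ y₂ : ℝ) ≤ 12 * δ + 2 * K + 2 := by
  by_contra! hlt
  have h := dist_add_dist_le hG hS hδ hK hY h₁ h₂ (by linarith)
  have h0 : (G.dist x x : ℝ) = 0 := by simp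
  have t := dtri hG y₁ x y₂
  have e := projSet_le h₂ h₁.1
  have c := dcomm (G := G) x y₁
  linarith

/-- Behrstock inequality for two quasiconvex sets and a vertex `x`: it compares, on each set, the
projection of `x` with the projection of the foot of `x` in the other set. -/
lemma behrstock_vertex (hG : G.Connected) (hS : SlimTrianglesG G δ) (hδ : 0 ≤ δ) (hK : 0 ≤ K)
    {Y Z : Set V} (hY : QuasiconvexIn G K Y) (hZ : QuasiconvexIn G K Z) {x y z y' z' : V}
    (hy : y ∈ projSet G Y x) (hz : z ∈ projSet G Z x) (hy' : y' ∈ projSet G Y z)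
    (hz' : z' ∈ projSet G Z y) :
    (G.dist y y' : ℝ) ≤ 4 * (6 * δ + K + 1) ∨ (G.dist z z' : ℝ) ≤ 4 * (6 * δ + K + 1) := by
  by_contra! h
  have h1 := dist_add_dist_le hG hS hδ hK hY hy hy' (by linarith [h.1])
  have h2 := dist_add_dist_le hG hS hδ hK hZ hz hz' (by linarith [h.2])
  have c := dcomm (G := G) z y
  have e := projSet_le hy' hy.1
  have t := dtri hG y z y'
  linarith [h.1]

/-- A long projection of `x, z` to `Y` gives a long piece of a geodesic `[x, z]` whose endpoints
`w₁, w₂` are close to `Y`. -/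
lemma exists_shadow (hG : G.Connected) (hS : SlimTrianglesG G δ) (hδ : 0 ≤ δ) (hK : 0 ≤ K)
    {Y : Set V} (hY : QuasiconvexIn G K Y) {x z y₁ y₂ : V} (h₁ : y₁ ∈ projSet G Y x)
    (h₂ : y₂ ∈ projSet G Y z) {L : ℝ} (hL : 0 ≤ L)
    (hd : L + 2 * (4 * δ + K + 1) + 2 * K < G.dist y₁ y₂) :
    ∃ w₁ w₂ v₁ v₂, OnGeod G x w₁ z ∧ OnGeod G x w₂ z ∧ v₁ ∈ Y ∧ v₂ ∈ Y ∧
      (G.dist v₁ w₁ : ℝ) ≤ K + 2 * δ ∧ (G.dist v₂ w₂ : ℝ) ≤ K + 2 * δ ∧ L < G.dist v₁ v₂ := by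
  obtain ⟨m₁, m₂, b₁, b₂, l₁, l₁', l₂, l₂', s₁, s₂⟩ :=
    exists_two_deep hG (x := y₁) (y := y₂) (s := 4 * δ + K) (by linarith) (by linarith)
  obtain ⟨w₁, hw₁, hd₁⟩ := near_of_proj hG hS hδ hY h₁ h₂ b₁ l₁ l₁'
  obtain ⟨w₂, hw₂, hd₂⟩ := near_of_proj hG hS hδ hY h₁ h₂ b₂ l₂ l₂'
  obtain ⟨v₁, hv₁, he₁⟩ := hY.btw hG h₁.1 h₂.1 b₁
  obtain ⟨v₂, hv₂, he₂⟩ := hY.btw hG h₁.1 h₂.1 b₂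
  have c1 := dcomm (G := G) v₁ m₁
  have c2 := dcomm (G := G) v₂ m₂
  have c3 := dcomm (G := G) y₁ m₁
  refine ⟨w₁, w₂, v₁, v₂, hw₁, hw₂, hv₁, hv₂, ?_, ?_, ?_⟩
  · linarith [dtri hG v₁ m₁ w₁]
  · linarith [dtri hG v₂ m₂ w₂]
  · linarith [dtri hG y₁ m₁ y₂, dtri hG m₁ v₁ y₂, dtri hG v₁ v₂ y₂, dtri hG v₂ m₂ y₂]

/-- Two separated quasiconvex sets cannot both be close to the ends of the same long piece of
`[x, z]`, where the ends are specified by their distances from `x`. -/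
lemma shadow_injective (hG : G.Connected) (hS : SlimTrianglesG G δ) (hδ : 0 ≤ δ) (hK : 0 ≤ K)
    (hM : 0 ≤ M0) {Y Y' : Set V} (hY : QuasiconvexIn G K Y) (hY' : QuasiconvexIn G K Y')
    (hsep : gdiam G (Y ∩ nbhd G (2 * K + 2 * δ) Y') ≤ ENNReal.ofReal M0)
    {x z w₁ w₂ v₁ v₂ w₁' w₂' v₁' v₂' : V}
    (b₁ : OnGeod G x w₁ z) (b₂ : OnGeod G x w₂ z) (b₁' : OnGeod G x w₁' z) (b₂' : OnGeod G x w₂' z)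
    (hv₁ : v₁ ∈ Y) (hv₂ : v₂ ∈ Y) (hv₁' : v₁' ∈ Y') (hv₂' : v₂' ∈ Y')
    (d₁ : (G.dist v₁ w₁ : ℝ) ≤ K + 2 * δ) (d₂ : (G.dist v₂ w₂ : ℝ) ≤ K + 2 * δ)
    (d₁' : (G.dist v₁' w₁' : ℝ) ≤ K + 2 * δ) (d₂' : (G.dist v₂' w₂' : ℝ) ≤ K + 2 * δ)
    (e₁ : G.dist x w₁ = G.dist x w₁') (e₂ : G.dist x w₂ = G.dist x w₂') :
    (G.dist v₁ v₂ : ℝ) ≤ M0 + 2 * (2 * K + 8 * δ + 1) + 2 * K := by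
  have f₁ : (G.dist v₁ v₁' : ℝ) ≤ 2 * K + 6 * δ := by
    linarith [bigon hG hS b₁ b₁' e₁, dtri hG v₁ w₁ v₁', dtri hG w₁ w₁' v₁',
      dcomm (G := G) w₁' v₁']
  have f₂ : (G.dist v₂ v₂' : ℝ) ≤ 2 * K + 6 * δ := by
    linarith [bigon hG hS b₂ b₂' e₂, dtri hG v₂ w₂ v₂', dtri hG w₂ w₂' v₂',
      dcomm (G := G) w₂' v₂']
  refine dist_le_of_deep_near hG hY hK hM hsep (by linarith) hv₁ hv₂ ?_
  intro m hm l₁ l₂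
  obtain ⟨w, hw | hw | hw, hd⟩ := quad_btw hG hS hδ v₁' v₂' hm
  · linarith [hw.real, dnonneg (G := G) w v₁', dtri hG m w v₁, dcomm (G := G) w v₁]
  · obtain ⟨u, hu, hwu⟩ := hY'.btw hG hv₁' hv₂' hw
    exact ⟨u, hu, by linarith [dtri hG m w u]⟩
  · linarith [hw.real, dnonneg (G := G) v₂' w, dtri hG m w v₂, dcomm (G := G) v₂ v₂']

end Projections

/-! ### Diameters and the index set -/

section Index

variable {V : Type*} {G : SimpleGraph V} {δ K M0 : ℝ}

lemma gdiam_le {S : Set V} {t : ℝ} (h : ∀ a ∈ S, ∀ b ∈ S, (G.dist a b : ℝ) ≤ t) :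
    gdiam G S ≤ ENNReal.ofReal t := by
  refine iSup₂_le fun a ha => iSup₂_le fun b hb => ?_
  rw [← ENNReal.ofReal_natCast]
  exact ENNReal.ofReal_le_ofReal (h a ha b hb)

lemma gdiam_union_triangle (hG : G.Connected) {A B C : Set V} (hB : B.Nonempty) :
    gdiam G (A ∪ C) ≤ gdiam G (A ∪ B) + gdiam G (B ∪ C) := by
  obtain ⟨b, hb⟩ := hB
  have key : ∀ p ∈ A, ∀ q ∈ C,
      (G.dist p q : ℝ≥0∞) ≤ gdiam G (A ∪ B) + gdiam G (B ∪ C) := by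
    intro p hp q hq
    have h1 : (G.dist p q : ℝ≥0∞) ≤ G.dist p b + G.dist b q := by
      exact_mod_cast hG.dist_triangle
    exact h1.trans (add_le_add (le_gdiam (Or.inl hp) (Or.inr hb))
      (le_gdiam (Or.inl hb) (Or.inr hq)))
  refine iSup₂_le fun p hp => iSup₂_le fun q hq => ?_
  rcases hp with hp | hp <;> rcases hq with hq | hq
  · have h : (G.dist p q : ℝ≥0∞) ≤ gdiam G (A ∪ B) := le_gdiam (Or.inl hp) (Or.inl hq)
    exact h.trans le_self_add
  · exact key p hp q hq
  · rw [SimpleGraph.dist_comm]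
    exact key q hq p hp
  · have h : (G.dist p q : ℝ≥0∞) ≤ gdiam G (B ∪ C) := le_gdiam (Or.inr hp) (Or.inr hq)
    exact h.trans le_add_self

/-- If `A` and `B` have diameter at most `T` and contain points at distance at most `s`, then
`A ∪ B` has diameter at most `2T + s`. -/
lemma dist_union_le (hG : G.Connected) {A B : Set V} {T s : ℝ}
    (hA : ∀ p ∈ A, ∀ q ∈ A, (G.dist p q : ℝ) ≤ T) (hB : ∀ p ∈ B, ∀ q ∈ B, (G.dist p q : ℝ) ≤ T)
    {a b : V} (ha : a ∈ A) (hb : b ∈ B) (hab : (G.dist a b : ℝ) ≤ s) :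
    ∀ p ∈ A ∪ B, ∀ q ∈ A ∪ B, (G.dist p q : ℝ) ≤ 2 * T + s := by
  have hT : 0 ≤ T := (dnonneg _ _).trans (hA a ha a ha)
  have hs : 0 ≤ s := (dnonneg _ _).trans hab
  have key : ∀ p ∈ A, ∀ q ∈ B, (G.dist p q : ℝ) ≤ 2 * T + s := fun p hp q hq => by
    linarith [dtri hG p a q, dtri hG a b q, hA p hp a ha, hB b hb q hq]
  rintro p (hp | hp) q (hq | hq)
  · linarith [hA p hp q hq]
  · exact key p hp q hq
  · rw [dcomm]
    exact key q hq p hp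
  · linarith [hB p hp q hq]

lemma dP_vertex (𝒴 : Set (Set V)) (x : V) (b c : V ⊕ ↥𝒴) : dP G 𝒴 (Sum.inl x) b c = 0 := by
  have : dP G 𝒴 (Sum.inl x) b c ≤ ENNReal.ofReal 0 := by
    refine gdiam_le ?_
    rintro p (rfl | rfl) q (rfl | rfl) <;> simp
  simpa using this

/-- Every index has a vertex whose projection to each member of the family is part of the
projection of the index: the vertex itself, or any point of the member. -/
lemma exists_rep {𝒴 : Set (Set V)} (hne : ∀ Y ∈ 𝒴, Y.Nonempty) (b : V ⊕ ↥𝒴) :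
    ∃ x : V, ∀ Y : ↥𝒴, projSet G (Y : Set V) x ⊆ projP G 𝒴 (Sum.inr Y) b := by
  rcases b with x | U
  · exact ⟨x, fun Y => subset_rfl⟩
  · obtain ⟨u, hu⟩ := hne U U.2
    exact ⟨u, fun Y => Set.subset_biUnion_of_mem (u := fun a => projSet G (Y : Set V) a) hu⟩

lemma projP_nonempty {𝒴 : Set (Set V)} (hne : ∀ Y ∈ 𝒴, Y.Nonempty) (a b : V ⊕ ↥𝒴) :
    (projP G 𝒴 a b).Nonempty := by
  rcases a with x | Y
  · exact ⟨x, rfl⟩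
  · obtain ⟨x, hx⟩ := exists_rep (G := G) hne b
    exact (projSet_nonempty (hne Y Y.2) x).mono (hx Y)

lemma projP_member_le (hG : G.Connected) (hS : SlimTrianglesG G δ) (hδ : 0 ≤ δ) (hK : 0 ≤ K)
    (hM : 0 ≤ M0) {𝒴 : Set (Set V)} (hqc : ∀ Y ∈ 𝒴, QuasiconvexIn G K Y)
    (hsep : ∀ Y ∈ 𝒴, ∀ Y' ∈ 𝒴, Y ≠ Y' →
      gdiam G (Y ∩ nbhd G (2 * K + 2 * δ) Y') ≤ ENNReal.ofReal M0)
    (Y : ↥𝒴) (b : V ⊕ ↥𝒴) (hb : Sum.inr Y ≠ b) :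
    ∀ p ∈ projP G 𝒴 (Sum.inr Y) b, ∀ q ∈ projP G 𝒴 (Sum.inr Y) b,
      (G.dist p q : ℝ) ≤ M0 + 12 * δ + 4 * K + 2 := by
  intro p hp q hq
  rcases b with x | U
  · linarith [proj_vertex_le hG hS hδ hK (hqc Y Y.2) hp hq]
  · have hYU : (Y : Set V) ≠ U := fun h => hb (congrArg Sum.inr (Subtype.ext h))
    obtain ⟨u₁, hu₁, hp'⟩ := Set.mem_iUnion₂.1 hp
    obtain ⟨u₂, hu₂, hq'⟩ := Set.mem_iUnion₂.1 hq
    linarith [proj_member_le hG hS hδ hK hM (hqc Y Y.2) (hqc U U.2) (hsep Y Y.2 U U.2 hYU)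
      hu₁ hu₂ hp' hq']

end Index


universe u

/-- Projection axioms for the index set `𝒳 = V ⊕ 𝒴` consisting of the vertices of the
graph together with an `M0`-geometrically separated family `𝒴` of nonempty
`K`-quasiconvex subsets whose `R`-neighborhoods cover the `δ`-hyperbolic graph: they hold
with a constant `Θ` depending only on `δ, K, M0, R` and bounded above by a linear
function of `M0` with coefficients depending only on `δ, K, R`. -/
theorem projection_axioms_with_points (δ K R : ℝ)
    (hδ : 0 ≤ δ) (hK : 0 ≤ K) (hR : 0 ≤ R) :
    ∃ c₁ c₂ : ℝ, 0 ≤ c₁ ∧ 0 ≤ c₂ ∧ ∀ M0 : ℝ, 0 ≤ M0 →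
      ∃ Θ : ℝ, Θ ≤ c₁ * M0 + c₂ ∧
        ∀ (V : Type u) (G : SimpleGraph V), G.Connected → SlimTrianglesG G δ →
          ∀ 𝒴 : Set (Set V),
            (∀ Y ∈ 𝒴, Y.Nonempty) → (∀ Y ∈ 𝒴, QuasiconvexIn G K Y) →
            (∀ Y ∈ 𝒴, ∀ Y' ∈ 𝒴, Y ≠ Y' →
              gdiam G (Y ∩ nbhd G (2 * K + 2 * δ) Y') ≤ ENNReal.ofReal M0) →
            (∀ v : V, ∃ Y ∈ 𝒴, ∃ u ∈ Y, (G.dist v u : ℝ) ≤ R) →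
            (∀ a b c : V ⊕ ↥𝒴, a ≠ b → a ≠ c → b ≠ c →
              -- (I) symmetry
              dP G 𝒴 a b c = dP G 𝒴 a c b ∧
              -- (II) triangle inequality
              (∀ d : V ⊕ ↥𝒴, d ≠ a →
                dP G 𝒴 a b d ≤ dP G 𝒴 a b c + dP G 𝒴 a c d) ∧
              -- (III) bounded self-projection
              dP G 𝒴 a b b ≤ ENNReal.ofReal Θ ∧
              -- (IV) Behrstock inequality
              min (dP G 𝒴 a b c) (dP G 𝒴 b a c) ≤ ENNReal.ofReal Θ) ∧
            -- (V) finitely many large projections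
            (∀ b c : V ⊕ ↥𝒴, b ≠ c →
              {a : V ⊕ ↥𝒴 | a ≠ b ∧ a ≠ c ∧
                ENNReal.ofReal Θ ≤ dP G 𝒴 a b c}.Finite) := by
  -- With `T = M0 + 12δ + 4K + 2` bounding single projections, (IV) needs `2T + 4 (6δ + K + 1)`,
  -- and (V) needs more than `2T` plus the length that guarantees shadows with
  -- `L = M0 + 2 (2K + 8δ + 1) + 2K`; the constant below exceeds both.
  refine ⟨4, 100 * δ + 100 * K + 100, by norm_num, by positivity, fun M0 hM =>
    ⟨4 * M0 + (100 * δ + 100 * K + 100), le_rfl, ?_⟩⟩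
  intro V G hG hS 𝒴 hne hqc hsep _
  have hIII := projP_member_le hG hS hδ hK hM hqc hsep
  refine ⟨fun a b c hab hac hbc => ⟨?_, ?_, ?_, ?_⟩, ?_⟩
  · unfold dP
    rw [Set.union_comm]
  · intro d _
    exact gdiam_union_triangle hG (projP_nonempty hne a c)
  · rcases a with x | Y
    · rw [dP_vertex]
      simp
    · unfold dP
      rw [Set.union_self]
      exact gdiam_le fun p hp q hq => by linarith [hIII Y b hab p hp q hq]
  · rcases a with x | Y
    · rw [dP_vertex]
      simp
    rcases b with x | Z
    · rw [dP_vertex]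
      simp
    obtain ⟨x, hx⟩ := exists_rep (G := G) hne c
    obtain ⟨y, hy⟩ := projSet_nonempty (G := G) (hne Y Y.2) x
    obtain ⟨z, hz⟩ := projSet_nonempty (G := G) (hne Z Z.2) x
    obtain ⟨y', hy'⟩ := projSet_nonempty (G := G) (hne Y Y.2) z
    obtain ⟨z', hz'⟩ := projSet_nonempty (G := G) (hne Z Z.2) y
    have my : y' ∈ projP G 𝒴 (Sum.inr Y) (Sum.inr Z) := Set.mem_iUnion₂.2 ⟨z, hz.1, hy'⟩
    have mz : z' ∈ projP G 𝒴 (Sum.inr Z) (Sum.inr Y) := Set.mem_iUnion₂.2 ⟨y, hy.1, hz'⟩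
    rcases behrstock_vertex hG hS hδ hK (hqc Y Y.2) (hqc Z Z.2) hy hz hy' hz' with h | h
    · refine (min_le_left _ _).trans (gdiam_le fun p hp q hq => ?_)
      rw [dcomm] at h
      linarith [dist_union_le hG (hIII Y _ hab) (hIII Y _ hac) my (hx Y hy) h p hp q hq]
    · refine (min_le_right _ _).trans (gdiam_le fun p hp q hq => ?_)
      rw [dcomm] at h
      linarith [dist_union_le hG (hIII Z _ hab.symm) (hIII Z _ hbc) mz (hx Z hz) h p hp q hq]
  · intro b c _
    obtain ⟨x, hx⟩ := exists_rep (G := G) hne b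
    obtain ⟨z, hz⟩ := exists_rep (G := G) hne c
    set L : ℝ := M0 + 2 * (2 * K + 8 * δ + 1) + 2 * K with hL
    -- `P a (i, j)`: `a` is a member `Y` that is close to points of geodesics from `x` to `z` at
    -- distances `i` and `j` from `x`, with the nearby points of `Y` more than `L` apart.
    let P : V ⊕ ↥𝒴 → ℕ × ℕ → Prop := fun a ij => ∃ Y : ↥𝒴, a = Sum.inr Y ∧
      ∃ w₁ w₂ v₁ v₂, OnGeod G x w₁ z ∧ OnGeod G x w₂ z ∧ v₁ ∈ (Y : Set V) ∧ v₂ ∈ (Y : Set V) ∧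
        (G.dist v₁ w₁ : ℝ) ≤ K + 2 * δ ∧ (G.dist v₂ w₂ : ℝ) ≤ K + 2 * δ ∧ L < G.dist v₁ v₂ ∧
        G.dist x w₁ = ij.1 ∧ G.dist x w₂ = ij.2
    have hP : ∀ a ∈ {a : V ⊕ ↥𝒴 | a ≠ b ∧ a ≠ c ∧
        ENNReal.ofReal (4 * M0 + (100 * δ + 100 * K + 100)) ≤ dP G 𝒴 a b c},
        ∃ ij : ℕ × ℕ, ij ∈ Set.Iic (G.dist x z) ×ˢ Set.Iic (G.dist x z) ∧ P a ij := by
      rintro a ⟨hab, hac, hd⟩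
      rcases a with v | Y
      · rw [dP_vertex, nonpos_iff_eq_zero, ENNReal.ofReal_eq_zero] at hd
        linarith
      obtain ⟨y₁, hy₁⟩ := projSet_nonempty (G := G) (hne Y Y.2) x
      obtain ⟨y₂, hy₂⟩ := projSet_nonempty (G := G) (hne Y Y.2) z
      have hlong : L + 2 * (4 * δ + K + 1) + 2 * K < G.dist y₁ y₂ := by
        by_contra! hle
        have h := gdiam_le (dist_union_le hG (hIII Y _ hab) (hIII Y _ hac) (hx Y hy₁) (hz Y hy₂)
          hle)
        have h' := (ENNReal.ofReal_le_ofReal_iff (by linarith)).1 (hd.trans h)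
        linarith
      obtain ⟨w₁, w₂, v₁, v₂, b₁, b₂, r⟩ :=
        exists_shadow hG hS hδ hK (hqc Y Y.2) hy₁ hy₂ (by linarith) hlong
      refine ⟨(G.dist x w₁, G.dist x w₂), ⟨?_, ?_⟩, Y, rfl, w₁, w₂, v₁, v₂, b₁, b₂,
        r.1, r.2.1, r.2.2.1, r.2.2.2.1, r.2.2.2.2, rfl, rfl⟩
      · exact Nat.le.intro b₁
      · exact Nat.le.intro b₂
    have hfin : (Set.Iic (G.dist x z) ×ˢ Set.Iic (G.dist x z)).Finite :=
      (Set.finite_Iic _).prod (Set.finite_Iic _)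
    choose! f hf hPf using hP
    refine Set.Finite.of_injOn (f := f) (fun a ha => hf a ha) ?_ hfin
    intro a ha a' ha' heq
    obtain ⟨Y, rfl, w₁, w₂, v₁, v₂, b₁, b₂, hv₁, hv₂, d₁, d₂, hl, e₁, e₂⟩ := hPf a ha
    obtain ⟨Y', rfl, w₁', w₂', v₁', v₂', b₁', b₂', hv₁', hv₂', d₁', d₂', -, e₁', e₂'⟩ :=
      hPf a' ha'
    by_contra hne'
    have hYY : (Y : Set V) ≠ Y' := fun h => hne' (congrArg Sum.inr (Subtype.ext h))
    have := shadow_injective hG hS hδ hK hM (hqc Y Y.2) (hqc Y' Y'.2) (hsep Y Y.2 Y' Y'.2 hYY)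
      b₁ b₂ b₁' b₂' hv₁ hv₂ hv₁' hv₂' d₁ d₂ d₁' d₂' (by rw [e₁, e₁', heq]) (by rw [e₂, e₂', heq])
    linarith
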